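/- Let Γ₁ : [n+r] → [n] × [r] and Γ₂ : [m+r] → [m] × [r] be maximal chains, and let α : [m] → [n] and β : [m+r] → [n+r] be injective monotone maps such that (α((Γ₂ k).fst), (Γ₂ k).snd) = Γ₁(β k) for all k ∈ [m+r]. Then for every i with 1 ≤ i ≤ r and every j ∈ [m+r]: (β(j) : ℕ) ≥ fs_{Γ₁}(i) + 1 if and only if (j : ℕ) ≥ fs_{Γ₂}(i) + 1. Equivalently, whenever the set { j ∈ [m+r] | (β(j) : ℕ) ≥ fs_{Γ₁}(i) + 1 } is nonempty, its least element is fs_{Γ₂}(i) + 1. -/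

import Mathlib

/-- `fs_Γ(i) = min { j | (Γ j).snd ≥ i }`, as a natural number, with the
index `i` taken in `ℕ` (`sInf` of the empty set is `0`; for maximal chains
and `i ≤ r` the set is nonempty). -/
noncomputable def fsN {q n r : ℕ} (Γ : Fin q → Fin (n + 1) × Fin (r + 1))
    (i : ℕ) : ℕ :=
  sInf { j : ℕ | ∃ h : j < q, i ≤ ((Γ ⟨j, h⟩).2 : ℕ) }

theorem chain_sum (n r : ℕ) (Γ : Fin (n + r + 1) → Fin (n + 1) × Fin (r + 1))
    (hm : Monotone Γ) (hi : Function.Injective Γ) (k : Fin (n + r + 1)) :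
    ((Γ k).1 : ℕ) + ((Γ k).2 : ℕ) = k := by
  have step : ∀ a b : Fin (n + r + 1), a < b →
      ((Γ a).1 : ℕ) + ((Γ a).2 : ℕ) < ((Γ b).1 : ℕ) + ((Γ b).2 : ℕ) := by
    intro a b hab
    have h := hm hab.le
    have h1 : ((Γ a).1 : ℕ) ≤ (Γ b).1 := h.1
    have h2 : ((Γ a).2 : ℕ) ≤ (Γ b).2 := h.2
    by_contra hc
    apply hab.ne
    apply hi
    apply Prod.ext <;> apply Fin.ext <;> omega
  have low : ∀ x : ℕ, ∀ hx : x < n + r + 1,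
      x ≤ ((Γ ⟨x, hx⟩).1 : ℕ) + ((Γ ⟨x, hx⟩).2 : ℕ) := by
    intro x
    induction x with
    | zero => intro _; exact Nat.zero_le _
    | succ x ih =>
      intro hx
      have h1 := ih (by omega)
      have h2 := step ⟨x, by omega⟩ ⟨x + 1, hx⟩ (by simp)
      omega
  have up : ∀ d x : ℕ, ∀ hx : x < n + r + 1, x + d = n + r →
      ((Γ ⟨x, hx⟩).1 : ℕ) + ((Γ ⟨x, hx⟩).2 : ℕ) ≤ x := by
    intro d
    induction d with
    | zero =>
      intro x hx h
      have h1 := (Γ ⟨x, hx⟩).1.isLt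
      have h2 := (Γ ⟨x, hx⟩).2.isLt
      omega
    | succ d ih =>
      intro x hx h
      have h1 := ih (x + 1) (by omega) (by omega)
      have h2 := step ⟨x, hx⟩ ⟨x + 1, by omega⟩ (by simp)
      omega
  exact le_antisymm (up (n + r - k) k k.isLt (by omega)) (low k k.isLt)

theorem fsN_spec (n r : ℕ) (Γ : Fin (n + r + 1) → Fin (n + 1) × Fin (r + 1))
    (hm : Monotone Γ) (hi : Function.Injective Γ) (i : ℕ) (hir : i ≤ r) :
    ∃ h : fsN Γ i < n + r + 1, i ≤ ((Γ ⟨fsN Γ i, h⟩).2 : ℕ) := by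
  have hne : { j : ℕ | ∃ h : j < n + r + 1, i ≤ ((Γ ⟨j, h⟩).2 : ℕ) }.Nonempty := by
    refine ⟨n + r, by omega, ?_⟩
    have h := chain_sum n r Γ hm hi ⟨n + r, by omega⟩
    have h1 := (Γ ⟨n + r, by omega⟩).1.isLt
    simp only at h
    omega
  exact Nat.sInf_mem hne

theorem fsN_le {q n r : ℕ} (Γ : Fin q → Fin (n + 1) × Fin (r + 1))
    (i : ℕ) (k : Fin q) (h : i ≤ ((Γ k).2 : ℕ)) : fsN Γ i ≤ k :=
  Nat.sInf_le ⟨k.isLt, h⟩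

/-- Let `Γ₁ : [n+r] → [n] × [r]` and `Γ₂ : [m+r] → [m] × [r]` be
maximal chains, and let `α : [m] → [n]` and `β : [m+r] → [n+r]` be injective
monotone maps such that `(α((Γ₂ k).fst), (Γ₂ k).snd) = Γ₁(β k)` for all `k`.
Then for every `1 ≤ i ≤ r` and every `j ∈ [m+r]`:
`β(j) ≥ fs_{Γ₁}(i) + 1` if and only if `j ≥ fs_{Γ₂}(i) + 1`. -/
theorem beta_fs_range (n r m : ℕ)
    (Γ₁ : Fin (n + r + 1) → Fin (n + 1) × Fin (r + 1))
    (hΓ₁mono : Monotone Γ₁) (hΓ₁inj : Function.Injective Γ₁)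
    (Γ₂ : Fin (m + r + 1) → Fin (m + 1) × Fin (r + 1))
    (hΓ₂mono : Monotone Γ₂) (hΓ₂inj : Function.Injective Γ₂)
    (α : Fin (m + 1) → Fin (n + 1)) (hαmono : Monotone α)
    (hαinj : Function.Injective α)
    (β : Fin (m + r + 1) → Fin (n + r + 1)) (hβmono : Monotone β)
    (hβinj : Function.Injective β)
    (hcomm : ∀ k, (α (Γ₂ k).1, (Γ₂ k).2) = Γ₁ (β k)) :
    ∀ i : ℕ, 1 ≤ i → i ≤ r → ∀ j : Fin (m + r + 1),
      (fsN Γ₁ i + 1 ≤ (β j : ℕ) ↔ fsN Γ₂ i + 1 ≤ (j : ℕ)) := by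
  intro i hi1 hir j
  have s1 := chain_sum n r Γ₁ hΓ₁mono hΓ₁inj
  have s2 := chain_sum m r Γ₂ hΓ₂mono hΓ₂inj
  obtain ⟨ha, ha'⟩ := fsN_spec n r Γ₁ hΓ₁mono hΓ₁inj i hir
  obtain ⟨hb, hb'⟩ := fsN_spec m r Γ₂ hΓ₂mono hΓ₂inj i hir
  have hmin := fsN_le Γ₂ i
  have hmin1 := fsN_le Γ₁ i
  generalize fsN Γ₁ i = a at *
  generalize fsN Γ₂ i = b at *
  have c1 : ∀ k, (α (Γ₂ k).1) = (Γ₁ (β k)).1 := fun k => congrArg Prod.fst (hcomm k)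
  have c2 : ∀ k, (Γ₂ k).2 = (Γ₁ (β k)).2 := fun k => congrArg Prod.snd (hcomm k)
  constructor
  · intro h
    by_contra hc
    have hjb : β j ≤ β ⟨b, hb⟩ := hβmono (by rw [Fin.le_def]; simp only; omega)
    have hjb' : (β j : ℕ) ≤ β ⟨b, hb⟩ := hjb
    have sb := s2 ⟨b, hb⟩
    simp only at sb
    have hp : b - 1 < m + r + 1 := by omega
    have sp := s2 ⟨b - 1, hp⟩
    simp only at sp
    have hlt : ((Γ₂ ⟨b - 1, hp⟩).2 : ℕ) < i := by
      by_contra hc'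
      have := hmin ⟨b - 1, hp⟩ (by omega)
      simp only at this
      omega
    have hm1 : ((Γ₂ ⟨b - 1, hp⟩).1 : ℕ) ≤ (Γ₂ ⟨b, hb⟩).1 :=
      (hΓ₂mono (show (⟨b - 1, hp⟩ : Fin (m + r + 1)) ≤ ⟨b, hb⟩ by
        rw [Fin.le_def]; simp only; omega)).1
    have heq : (Γ₂ ⟨b - 1, hp⟩).1 = (Γ₂ ⟨b, hb⟩).1 := by
      apply Fin.ext; omega
    have e1 := c1 ⟨b, hb⟩
    have e2 := c1 ⟨b - 1, hp⟩
    rw [heq, e1] at e2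
    have f1 := s1 (β ⟨b, hb⟩)
    have f2 := s1 (β ⟨b - 1, hp⟩)
    rw [← c2] at f1 f2
    rw [← e2] at f2
    have hlast : (β ⟨b - 1, hp⟩ : ℕ) < a := by
      by_contra hc'
      have hle : (⟨a, ha⟩ : Fin (n + r + 1)) ≤ β ⟨b - 1, hp⟩ := by
        rw [Fin.le_def]; simp only; omega
      have h2 : ((Γ₁ ⟨a, ha⟩).2 : ℕ) ≤ (Γ₁ (β ⟨b - 1, hp⟩)).2 := (hΓ₁mono hle).2
      rw [← c2] at h2
      omega
    have hv := congrArg Fin.val heq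
    omega
  · intro h
    have h1 := hmin1 (β ⟨b, hb⟩) (by rw [← c2]; exact hb')
    have hle : (⟨b, hb⟩ : Fin (m + r + 1)) < j := by
      rw [Fin.lt_def]; simp only; omega
    have h2 : (β ⟨b, hb⟩ : ℕ) < β j := hβmono.strictMono_of_injective hβinj hle
    omega
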